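/- Let n ≥ 3 and f ∈ C_0^∞(ℝ^n). Then ((n-2)^2/4) ∫_{ℝ^n} |x|^{-2} |f(x)|^2 dx ≤ ∫_{ℝ^n} |∇f(x)|^2 dx. -/

import Mathlib

open MeasureTheory

/-!
Let `w = (‖x‖² + ε)⁻¹`, a smooth substitute for `‖x‖⁻²`, and `h = w ‖f‖²`. For every `c ≥ 0`,
expanding `(‖Df‖ - c w ‖x‖ ‖f‖)² ≥ 0` and using `‖x‖² w ≤ 1` bounds `‖Df‖²` from below by
`-c (Dh(x) x + 2 h) - c² h`. The divergence of the field `x ↦ x` is `n`, so integration by parts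
gives `∫ Dh(x) x = -n ∫ h`, hence `(c (n - 2) - c²) ∫ h ≤ ∫ ‖Df‖²`. The best choice is
`c = (n - 2) / 2`, and Fatou's lemma removes `ε`.
-/

section Fatou

open Filter Topology

variable {α : Type*} [MeasurableSpace α] {μ : Measure α} {u : ℕ → α → ℝ} {g : α → ℝ} {C : ℝ}

lemma lintegral_ofReal_le_of_tendsto_of_integral_le (hu : ∀ k, Integrable (u k) μ)
    (hu_nonneg : ∀ k, 0 ≤ᵐ[μ] u k) (hC : ∀ k, ∫ x, u k x ∂μ ≤ C)
    (hlim : ∀ᵐ x ∂μ, Tendsto (u · x) atTop (𝓝 (g x))) :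
    ∫⁻ x, ENNReal.ofReal (g x) ∂μ ≤ ENNReal.ofReal C :=
  calc ∫⁻ x, ENNReal.ofReal (g x) ∂μ
      = ∫⁻ x, liminf (fun k ↦ ENNReal.ofReal (u k x)) atTop ∂μ :=
        lintegral_congr_ae <| hlim.mono fun _ hx ↦ (ENNReal.tendsto_ofReal hx).liminf_eq.symm
    _ ≤ liminf (fun k ↦ ∫⁻ x, ENNReal.ofReal (u k x) ∂μ) atTop :=
        lintegral_liminf_le' fun k ↦ (hu k).aemeasurable.ennreal_ofReal
    _ = liminf (fun k ↦ ENNReal.ofReal (∫ x, u k x ∂μ)) atTop := by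
        simp_rw [ofReal_integral_eq_lintegral_ofReal (hu _) (hu_nonneg _)]
    _ ≤ liminf (fun _ ↦ ENNReal.ofReal C) atTop :=
        liminf_le_liminf (.of_forall fun k ↦ ENNReal.ofReal_le_ofReal (hC k))
    _ = ENNReal.ofReal C := liminf_const _

lemma integrable_and_integral_le_of_tendsto_of_integral_le (hu : ∀ k, Integrable (u k) μ)
    (hu_nonneg : ∀ k, 0 ≤ᵐ[μ] u k) (hC : ∀ k, ∫ x, u k x ∂μ ≤ C)
    (hlim : ∀ᵐ x ∂μ, Tendsto (u · x) atTop (𝓝 (g x))) :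
    Integrable g μ ∧ ∫ x, g x ∂μ ≤ C := by
  have hle := lintegral_ofReal_le_of_tendsto_of_integral_le hu hu_nonneg hC hlim
  have hg_nonneg : 0 ≤ᵐ[μ] g := by
    filter_upwards [ae_all_iff.mpr hu_nonneg, hlim] with x hx hxlim
    exact ge_of_tendsto' hxlim hx
  have hg_meas : AEStronglyMeasurable g μ :=
    aestronglyMeasurable_of_tendsto_ae atTop (fun k ↦ (hu k).aestronglyMeasurable) hlim
  have hC_nonneg : 0 ≤ C := (integral_nonneg_of_ae (hu_nonneg 0)).trans (hC 0)
  refine ⟨(lintegral_ofReal_ne_top_iff_integrable hg_meas hg_nonneg).mp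
    (ne_top_of_le_ne_top ENNReal.ofReal_ne_top hle), ?_⟩
  rw [integral_eq_lintegral_of_nonneg_ae hg_nonneg hg_meas]
  exact ENNReal.toReal_le_of_le_ofReal hC_nonneg hle

end Fatou

section EulerField

open Module

variable {E G : Type*} [NormedAddCommGroup E] [NormedSpace ℝ E]
  [NormedAddCommGroup G] [NormedSpace ℝ G] {h : E → G}

lemma integrable_clm_smul_fderiv_apply [MeasurableSpace E] [OpensMeasurableSpace E] {μ : Measure E}
    [IsFiniteMeasureOnCompacts μ] (hh : ContDiff ℝ 1 h) (hsupp : HasCompactSupport h)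
    (p : E →L[ℝ] ℝ) (v : E) : Integrable (fun x ↦ p x • fderiv ℝ h x v) μ :=
  (p.continuous.smul ((hh.continuous_fderiv one_ne_zero).clm_apply continuous_const)
    ).integrable_of_hasCompactSupport (hsupp.fderiv_apply (𝕜 := ℝ) v).smul_left

lemma integrable_norm_fderiv_sq [MeasurableSpace E] [OpensMeasurableSpace E] {μ : Measure E}
    [IsFiniteMeasureOnCompacts μ] (hh : ContDiff ℝ 1 h) (hsupp : HasCompactSupport h) :
    Integrable (fun x ↦ ‖fderiv ℝ h x‖ ^ 2) μ :=
  ((hh.continuous_fderiv one_ne_zero).norm.memLp_of_hasCompactSupport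
    (hsupp.fderiv (𝕜 := ℝ)).norm).integrable_sq

variable [FiniteDimensional ℝ E]

lemma fderiv_apply_self_eq_sum_coord {ι : Type*} [Fintype ι] (b : Basis ι ℝ E) (x : E) :
    fderiv ℝ h x x = ∑ i, (b.coord i).toContinuousLinearMap x • fderiv ℝ h x (b i) := by
  conv_lhs => rw [← b.sum_repr x, map_sum]
  simp [map_smul]

lemma integrable_fderiv_apply_self [MeasurableSpace E] [OpensMeasurableSpace E] {μ : Measure E}
    [IsFiniteMeasureOnCompacts μ] (hh : ContDiff ℝ 1 h) (hsupp : HasCompactSupport h) :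
    Integrable (fun x ↦ fderiv ℝ h x x) μ := by
  simp_rw [fderiv_apply_self_eq_sum_coord (finBasis ℝ E)]
  exact integrable_finsetSum _ fun _ _ ↦ integrable_clm_smul_fderiv_apply hh hsupp _ _

variable [MeasurableSpace E] [BorelSpace E] {μ : Measure E} [μ.IsAddHaarMeasure]

lemma integral_clm_smul_fderiv_apply (hh : ContDiff ℝ 1 h) (hsupp : HasCompactSupport h)
    (p : E →L[ℝ] ℝ) (v : E) :
    ∫ x, p x • fderiv ℝ h x v ∂μ = -(p v • ∫ x, h x ∂μ) := by
  have hh_int : Integrable h μ := hh.continuous.integrable_of_hasCompactSupport hsupp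
  rw [integral_smul_fderiv_eq_neg_fderiv_smul_of_integrable]
  · simp only [p.fderiv, integral_smul]
  · simpa only [p.fderiv] using hh_int.fun_smul (p v)
  · exact integrable_clm_smul_fderiv_apply hh hsupp p v
  · exact (p.continuous.smul hh.continuous).integrable_of_hasCompactSupport hsupp.smul_left
  · exact fun _ _ ↦ p.differentiableAt
  · exact fun x _ ↦ hh.differentiable one_ne_zero x

lemma integral_fderiv_apply_self (hh : ContDiff ℝ 1 h) (hsupp : HasCompactSupport h) :
    ∫ x, fderiv ℝ h x x ∂μ = -((finrank ℝ E : ℝ) • ∫ x, h x ∂μ) := by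
  simp_rw [fderiv_apply_self_eq_sum_coord (finBasis ℝ E)]
  rw [integral_finsetSum _ fun _ _ ↦ integrable_clm_smul_fderiv_apply hh hsupp _ _]
  simp only [integral_clm_smul_fderiv_apply hh hsupp]
  simp [Nat.cast_smul_eq_nsmul]

end EulerField

section Hardy

open Filter Topology Module

variable {E F : Type*} [NormedAddCommGroup E] [NormedAddCommGroup F] {f : E → F} {ε : ℝ}

/-- The density `‖x‖⁻² ‖f x‖²` in Hardy's inequality, with `‖x‖²` replaced by `‖x‖² + ε`; for
`ε > 0` this removes the singularity at the origin. -/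
noncomputable def hardyDensity (f : E → F) (ε : ℝ) (x : E) : ℝ :=
  (‖x‖ ^ 2 + ε)⁻¹ * ‖f x‖ ^ 2

lemma norm_sq_mul_inv_norm_sq_add_le_one (x : E) (hε : 0 ≤ ε) :
    ‖x‖ ^ 2 * (‖x‖ ^ 2 + ε)⁻¹ ≤ 1 :=
  div_le_one_of_le₀ (le_add_of_nonneg_right hε) (by positivity)

lemma hardyDensity_nonneg (hε : 0 ≤ ε) (x : E) : 0 ≤ hardyDensity f ε x := by
  unfold hardyDensity
  positivity

lemma hasCompactSupport_hardyDensity (hsupp : HasCompactSupport f) :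
    HasCompactSupport (hardyDensity f ε) :=
  (hsupp.comp_left (g := fun z : F ↦ ‖z‖ ^ 2) (by simp)).mul_left

lemma continuous_hardyDensity (hf : Continuous f) (hε : 0 < ε) :
    Continuous (hardyDensity f ε) :=
  (((continuous_norm.pow 2).add continuous_const).inv₀
    fun x ↦ (add_pos_of_nonneg_of_pos (sq_nonneg ‖x‖) hε).ne').mul (hf.norm.pow 2)

lemma integrable_hardyDensity [MeasurableSpace E] [OpensMeasurableSpace E] {μ : Measure E}
    [IsFiniteMeasureOnCompacts μ] (hf : Continuous f) (hsupp : HasCompactSupport f) (hε : 0 < ε) :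
    Integrable (hardyDensity f ε) μ :=
  (continuous_hardyDensity hf hε).integrable_of_hasCompactSupport
    (hasCompactSupport_hardyDensity hsupp)

lemma tendsto_hardyDensity {ι : Type*} {l : Filter ι} {e : ι → ℝ} {x : E} (hx : x ≠ 0)
    (he : Tendsto e l (𝓝 0)) :
    Tendsto (fun k ↦ hardyDensity f (e k) x) l (𝓝 (‖x‖⁻¹ ^ 2 * ‖f x‖ ^ 2)) := by
  have hden : Tendsto (fun k ↦ ‖x‖ ^ 2 + e k) l (𝓝 (‖x‖ ^ 2)) := by
    simpa only [add_zero] using he.const_add (‖x‖ ^ 2)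
  rw [inv_pow]
  exact (hden.inv₀ (by simpa using hx)).mul_const _

variable [InnerProductSpace ℝ E] [InnerProductSpace ℝ F]

lemma contDiff_hardyDensity {m : WithTop ℕ∞} (hf : ContDiff ℝ m f) (hε : 0 < ε) :
    ContDiff ℝ m (hardyDensity f ε) :=
  (((contDiff_norm_sq ℝ).add contDiff_const).inv fun x ↦ by positivity).mul (hf.norm_sq ℝ)

lemma fderiv_hardyDensity_apply_self {x : E} (hf : DifferentiableAt ℝ f x) (hε : 0 < ε) :
    fderiv ℝ (hardyDensity f ε) x x =
      2 * (‖x‖ ^ 2 + ε)⁻¹ * inner ℝ (f x) (fderiv ℝ f x x) -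
        2 * (‖x‖ ^ 2 * (‖x‖ ^ 2 + ε)⁻¹) * hardyDensity f ε x := by
  have hden : ‖x‖ ^ 2 + ε ≠ 0 := by positivity
  have hweight : HasFDerivAt (fun y : E ↦ (‖y‖ ^ 2 + ε)⁻¹) _ x :=
    (hasDerivAt_inv hden).comp_hasFDerivAt x ((hasFDerivAt_id x).norm_sq.add_const ε)
  have hderiv : HasFDerivAt (hardyDensity f ε) _ x := hweight.mul hf.hasFDerivAt.norm_sq
  rw [hderiv.fderiv]
  simp only [id_eq, ContinuousLinearMap.comp_id, add_apply, smul_apply,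
    ContinuousLinearMap.comp_apply, coe_innerSL_apply, nsmul_eq_mul, Nat.cast_ofNat, smul_eq_mul,
    real_inner_self_eq_norm_sq, ← inv_pow, hardyDensity]
  ring

lemma le_fderiv_hardyDensity_apply_self {x : E} (hf : DifferentiableAt ℝ f x) (hε : 0 < ε) :
    -(2 * (‖x‖ ^ 2 + ε)⁻¹ * (‖f x‖ * (‖fderiv ℝ f x‖ * ‖x‖))) - 2 * hardyDensity f ε x ≤
      fderiv ℝ (hardyDensity f ε) x x := by
  have hinner : -(‖f x‖ * (‖fderiv ℝ f x‖ * ‖x‖)) ≤ inner ℝ (f x) (fderiv ℝ f x x) :=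
    calc -(‖f x‖ * (‖fderiv ℝ f x‖ * ‖x‖))
        ≤ -(‖f x‖ * ‖fderiv ℝ f x x‖) := by gcongr; exact (fderiv ℝ f x).le_opNorm x
      _ ≤ inner ℝ (f x) (fderiv ℝ f x x) :=
          (abs_le.mp (abs_real_inner_le_norm (f x) (fderiv ℝ f x x))).1
  have hweight := norm_sq_mul_inv_norm_sq_add_le_one x hε.le
  have hnonneg := hardyDensity_nonneg (f := f) hε.le x
  calc -(2 * (‖x‖ ^ 2 + ε)⁻¹ * (‖f x‖ * (‖fderiv ℝ f x‖ * ‖x‖))) - 2 * hardyDensity f ε x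
      = 2 * (‖x‖ ^ 2 + ε)⁻¹ * -(‖f x‖ * (‖fderiv ℝ f x‖ * ‖x‖)) -
          2 * 1 * hardyDensity f ε x := by ring
    _ ≤ 2 * (‖x‖ ^ 2 + ε)⁻¹ * inner ℝ (f x) (fderiv ℝ f x x) -
          2 * (‖x‖ ^ 2 * (‖x‖ ^ 2 + ε)⁻¹) * hardyDensity f ε x := by gcongr
    _ = fderiv ℝ (hardyDensity f ε) x x := (fderiv_hardyDensity_apply_self hf hε).symm

lemma neg_mul_fderiv_hardyDensity_sub_le_norm_fderiv_sq {x : E} {c : ℝ}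
    (hf : DifferentiableAt ℝ f x) (hε : 0 < ε) (hc : 0 ≤ c) :
    -(c * (fderiv ℝ (hardyDensity f ε) x x + 2 * hardyDensity f ε x)) -
      c ^ 2 * hardyDensity f ε x ≤ ‖fderiv ℝ f x‖ ^ 2 := by
  set w : ℝ := (‖x‖ ^ 2 + ε)⁻¹ with hw
  have hderiv : -(c * (fderiv ℝ (hardyDensity f ε) x x + 2 * hardyDensity f ε x)) ≤
      2 * ‖fderiv ℝ f x‖ * (c * w * ‖x‖ * ‖f x‖) := by
    linarith [mul_le_mul_of_nonneg_left (le_fderiv_hardyDensity_apply_self hf hε) hc]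
  have hsq : (c * w * ‖x‖ * ‖f x‖) ^ 2 ≤ c ^ 2 * hardyDensity f ε x :=
    calc (c * w * ‖x‖ * ‖f x‖) ^ 2
        = c ^ 2 * ((‖x‖ ^ 2 * w) * hardyDensity f ε x) := by rw [hardyDensity, ← hw]; ring
      _ ≤ c ^ 2 * hardyDensity f ε x := by
          gcongr
          exact mul_le_of_le_one_left (hardyDensity_nonneg hε.le x)
            (norm_sq_mul_inv_norm_sq_add_le_one x hε.le)
  linarith [two_mul_le_add_sq ‖fderiv ℝ f x‖ (c * w * ‖x‖ * ‖f x‖)]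

variable [FiniteDimensional ℝ E] [MeasurableSpace E] [BorelSpace E] {μ : Measure E}
  [μ.IsAddHaarMeasure]

lemma mul_integral_hardyDensity_le_integral_norm_fderiv_sq {c : ℝ} (hf : ContDiff ℝ 1 f)
    (hsupp : HasCompactSupport f) (hε : 0 < ε) (hc : 0 ≤ c) :
    (c * (finrank ℝ E - 2) - c ^ 2) * ∫ x, hardyDensity f ε x ∂μ ≤
      ∫ x, ‖fderiv ℝ f x‖ ^ 2 ∂μ := by
  have hcontDiff := contDiff_hardyDensity hf hε
  have hcompact := hasCompactSupport_hardyDensity (ε := ε) hsupp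
  have hint : Integrable (hardyDensity f ε) μ := integrable_hardyDensity hf.continuous hsupp hε
  have hderiv_int : Integrable (fun x ↦ fderiv ℝ (hardyDensity f ε) x x) μ :=
    integrable_fderiv_apply_self hcontDiff hcompact
  have hsum_int := (hderiv_int.fun_add (hint.const_mul 2)).const_mul c
  calc (c * (finrank ℝ E - 2) - c ^ 2) * ∫ x, hardyDensity f ε x ∂μ
      = ∫ x, (-(c * (fderiv ℝ (hardyDensity f ε) x x + 2 * hardyDensity f ε x)) -
          c ^ 2 * hardyDensity f ε x) ∂μ := by
        rw [integral_sub hsum_int.fun_neg (hint.const_mul _), integral_neg, integral_const_mul,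
          integral_add hderiv_int (hint.const_mul 2), integral_const_mul, integral_const_mul,
          integral_fderiv_apply_self hcontDiff hcompact, smul_eq_mul]
        ring
    _ ≤ ∫ x, ‖fderiv ℝ f x‖ ^ 2 ∂μ :=
        integral_mono (hsum_int.fun_neg.sub (hint.const_mul _)) (integrable_norm_fderiv_sq hf hsupp)
          fun x ↦ neg_mul_fderiv_hardyDensity_sub_le_norm_fderiv_sq
            (hf.differentiable one_ne_zero x) hε hc

theorem stmt3_general (hdim : 3 ≤ finrank ℝ E) (hf : ContDiff ℝ 1 f)
    (hsupp : HasCompactSupport f) :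
    Integrable (fun x ↦ ‖x‖⁻¹ ^ 2 * ‖f x‖ ^ 2) μ ∧
      ((finrank ℝ E : ℝ) - 2) ^ 2 / 4 * ∫ x, ‖x‖⁻¹ ^ 2 * ‖f x‖ ^ 2 ∂μ ≤
        ∫ x, ‖fderiv ℝ f x‖ ^ 2 ∂μ := by
  have : Nontrivial E := nontrivial_of_finrank_pos (R := ℝ) (by lia)
  have hdim' : (0 : ℝ) < finrank ℝ E - 2 := by
    have : (3 : ℝ) ≤ finrank ℝ E := mod_cast hdim
    linarith
  have hconst : (0 : ℝ) < ((finrank ℝ E : ℝ) - 2) ^ 2 / 4 := by positivity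
  have hcoeff : ((finrank ℝ E : ℝ) - 2) ^ 2 / 4 = ((finrank ℝ E : ℝ) - 2) / 2 * (finrank ℝ E - 2) -
      (((finrank ℝ E : ℝ) - 2) / 2) ^ 2 := by ring
  have hbound (k : ℕ) : ∫ x, hardyDensity f (1 / ((k : ℝ) + 1)) x ∂μ ≤
      (∫ x, ‖fderiv ℝ f x‖ ^ 2 ∂μ) / (((finrank ℝ E : ℝ) - 2) ^ 2 / 4) := by
    rw [le_div_iff₀' hconst, hcoeff]
    exact mul_integral_hardyDensity_le_integral_norm_fderiv_sq hf hsupp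
      Nat.one_div_pos_of_nat (by positivity)
  have hlim : ∀ᵐ x ∂μ, Tendsto (fun k : ℕ ↦ hardyDensity f (1 / ((k : ℝ) + 1)) x) atTop
      (𝓝 (‖x‖⁻¹ ^ 2 * ‖f x‖ ^ 2)) := by
    filter_upwards [Measure.ae_ne μ 0] with x hx
    exact tendsto_hardyDensity hx tendsto_one_div_add_atTop_nhds_zero_nat
  have ⟨hint, hle⟩ := integrable_and_integral_le_of_tendsto_of_integral_le
    (fun _ ↦ integrable_hardyDensity hf.continuous hsupp Nat.one_div_pos_of_nat)
    (fun _ ↦ .of_forall (hardyDensity_nonneg Nat.one_div_pos_of_nat.le)) hbound hlim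
  exact ⟨hint, (le_div_iff₀' hconst).mp hle⟩

end Hardy

/-- Hardy's inequality: for `n ≥ 3` and `f ∈ C₀^∞(ℝⁿ)`,
`((n-2)²/4) ∫ |x|⁻² |f(x)|² dx ≤ ∫ |∇f(x)|² dx`. -/
theorem stmt3 (n : ℕ) (hn : 3 ≤ n) (f : EuclideanSpace ℝ (Fin n) → ℂ)
    (hf : ContDiff ℝ (⊤ : ℕ∞) f) (hsupp : HasCompactSupport f) :
    ((n : ℝ) - 2) ^ 2 / 4 *
        ∫ x : EuclideanSpace ℝ (Fin n), ‖x‖⁻¹ ^ 2 * ‖f x‖ ^ 2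
      ≤ ∫ x : EuclideanSpace ℝ (Fin n), ‖fderiv ℝ f x‖ ^ 2 := by
  simpa only [finrank_euclideanSpace_fin] using
    (stmt3_general (μ := volume) (by simpa only [finrank_euclideanSpace_fin] using hn)
      (hf.of_le (mod_cast le_top)) hsupp).2
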